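/- There is no function m : (0,∞) → ℝ with the following properties: m is differentiable on (0,∞), lim_{s→0⁺} m(s) = 1, m(s) ≥ 1 for all s > 0, s m'(s) ≥ (m(s) − 1)² for all s > 0, and m(s₀) > 1 for some s₀ > 0. -/

import Mathlib

/-!
Solutions of the Riccati-type inequality `s u' ≥ u²`, with `u = m - 1`, blow up in finite time.
The inequality makes `m` nondecreasing, so `u > 0` on `[s₀, ∞)`, and there it says that
`1 / u(s) + log s` is nonincreasing. Hence `1 / u(s) ≤ 1 / u(s₀) - log (s / s₀)`, whose right-hand
side vanishes at `s = s₀ * exp (1 / u(s₀))`, contradicting the finiteness of `m` there.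
-/

open MeasureTheory Real Filter Set

noncomputable section

abbrev E3 := EuclideanSpace ℝ (Fin 3)

/-- `i`-th partial derivative of a spinor field. -/
def pd (i : Fin 3) (φ : E3 → ℂ × ℂ) (x : E3) : ℂ × ℂ :=
  fderiv ℝ φ x (EuclideanSpace.single i 1)

/-- The operator `σ·∇` built from the Pauli matrices. -/
def sigmaGrad (φ : E3 → ℂ × ℂ) (x : E3) : ℂ × ℂ :=
  ((pd 2 φ x).1 + (pd 0 φ x).2 - Complex.I * (pd 1 φ x).2,
   (pd 0 φ x).1 + Complex.I * (pd 1 φ x).1 - (pd 2 φ x).2)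

/-- Squared norm of a two-spinor value. -/
def nsq (p : ℂ × ℂ) : ℝ := ‖p.1‖ ^ 2 + ‖p.2‖ ^ 2

/-- Pauli matrix `σ₁` acting on `ℂ²`. -/
def pauli1 (p : ℂ × ℂ) : ℂ × ℂ := (p.2, p.1)

/-- Pauli matrix `σ₂` acting on `ℂ²`. -/
def pauli2 (p : ℂ × ℂ) : ℂ × ℂ := (-(Complex.I * p.2), Complex.I * p.1)

/-- Pauli matrix `σ₃` acting on `ℂ²`. -/
def pauli3 (p : ℂ × ℂ) : ℂ × ℂ := (p.1, -p.2)

/-- The spin-orbit operator `σ·L`. -/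
def sigmaL (φ : E3 → ℂ × ℂ) (x : E3) : ℂ × ℂ :=
  (-Complex.I) •
    (pauli1 ((x 1 : ℂ) • pd 2 φ x - (x 2 : ℂ) • pd 1 φ x) +
     pauli2 ((x 2 : ℂ) • pd 0 φ x - (x 0 : ℂ) • pd 2 φ x) +
     pauli3 ((x 0 : ℂ) • pd 1 φ x - (x 1 : ℂ) • pd 0 φ x))

/-- `σ·x = σ₁x₁ + σ₂x₂ + σ₃x₃` acting on a spinor value. -/
def sigmaDotX (x : E3) (p : ℂ × ℂ) : ℂ × ℂ :=
  ((x 2 : ℂ) * p.1 + ((x 0 : ℂ) - Complex.I * (x 1 : ℂ)) * p.2,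
   ((x 0 : ℂ) + Complex.I * (x 1 : ℂ)) * p.1 - (x 2 : ℂ) * p.2)

/-- Inequality (R8) for a weight `W`, a radius `R` and a constant `C`. -/
def IneqR8 (W : ℝ → ℝ) (R C : ℝ) : Prop :=
  ∀ φ : E3 → ℂ × ℂ, ContDiff ℝ (⊤ : ℕ∞) φ → HasCompactSupport φ →
    (∫ x : E3, (W ‖x‖ / ‖x‖) * nsq (φ x)) +
        C * (∫ x in Metric.sphere (0 : E3) R, nsq (φ x) ∂μH[2]) ≤
      ∫ x : E3, (nsq (sigmaGrad φ x) / (1 + W ‖x‖ / ‖x‖) + nsq (φ x))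

/-- Iterated logarithmic functions: `Xk a 1 = (a - log s)⁻¹`, `Xk a (k+1) = X₁ ∘ Xk a k`. -/
def Xk (a : ℝ) : ℕ → ℝ → ℝ
  | 0, s => s
  | k + 1, s => (a - Real.log (Xk a k s))⁻¹

/-- `π_j(s) = X₁(s)⋯X_j(s)`. -/
def piX (a : ℝ) (j : ℕ) (s : ℝ) : ℝ := ∏ i ∈ Finset.Icc 1 j, Xk a i s

/-- `Σ_{j=1}^k X₁(s)²⋯X_j(s)²`. -/
def sumX2 (a : ℝ) (k : ℕ) (s : ℝ) : ℝ := ∑ j ∈ Finset.Icc 1 k, (piX a j s) ^ 2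

theorem no_global_m :
    ¬ ∃ m : ℝ → ℝ,
      (∀ s > (0 : ℝ), DifferentiableAt ℝ m s) ∧
      Filter.Tendsto m (nhdsWithin 0 (Set.Ioi 0)) (nhds 1) ∧
      (∀ s > (0 : ℝ), 1 ≤ m s) ∧
      (∀ s > (0 : ℝ), (m s - 1) ^ 2 ≤ s * deriv m s) ∧
      (∃ s₀ > (0 : ℝ), 1 < m s₀) := by
  rintro ⟨m, hd, -, h1, hi, s₀, hs₀, hm₀⟩
  have hmono : MonotoneOn m (Ioi 0) := by
    refine monotoneOn_of_deriv_nonneg (convex_Ioi 0)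
      (fun x hx => (hd x hx).continuousAt.continuousWithinAt) ?_ ?_
    · rw [interior_Ioi]
      exact fun x hx => (hd x hx).differentiableWithinAt
    · rw [interior_Ioi]
      intro x hx
      exact nonneg_of_mul_nonneg_right ((sq_nonneg _).trans (hi x hx)) hx
  have hu : ∀ x ∈ Ici s₀, 0 < x ∧ 0 < m x - 1 := by
    intro x hx
    have hx0 : 0 < x := lt_of_lt_of_le hs₀ hx
    have := hmono (mem_Ioi.2 hs₀) (mem_Ioi.2 hx0) hx
    exact ⟨hx0, by linarith⟩
  have hder : ∀ x ∈ Ici s₀, HasDerivAt (fun s => (m s - 1)⁻¹ + Real.log s)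
      (-deriv m x / (m x - 1) ^ 2 + x⁻¹) x := by
    intro x hx
    obtain ⟨hx0, hux⟩ := hu x hx
    exact (((hd x hx0).hasDerivAt.sub_const 1).inv hux.ne').add (Real.hasDerivAt_log hx0.ne')
  have hanti : AntitoneOn (fun s => (m s - 1)⁻¹ + Real.log s) (Ici s₀) := by
    refine antitoneOn_of_deriv_nonpos (convex_Ici s₀)
      (fun x hx => (hder x hx).continuousAt.continuousWithinAt)
      (fun x hx => (hder x (interior_subset hx)).differentiableAt.differentiableWithinAt) ?_
    intro x hx
    have hx' := interior_subset hx
    obtain ⟨hx0, hux⟩ := hu x hx'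
    rw [(hder x hx').deriv]
    have : x⁻¹ ≤ deriv m x / (m x - 1) ^ 2 := by
      rw [inv_eq_one_div, div_le_div_iff₀ hx0 (by positivity)]
      linarith [hi x hx0]
    rw [neg_div]
    linarith
  -- At this point the bound on the reciprocal of `m - 1` has dropped to exactly zero.
  set T := s₀ * Real.exp (m s₀ - 1)⁻¹ with hT
  have hu₀ : 0 < (m s₀ - 1)⁻¹ := inv_pos.2 (by linarith)
  have hsT : s₀ ≤ T := le_mul_of_one_le_right hs₀.le (Real.one_le_exp hu₀.le)
  have hle : (m T - 1)⁻¹ + Real.log T ≤ (m s₀ - 1)⁻¹ + Real.log s₀ :=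
    hanti (mem_Ici.2 le_rfl) hsT hsT
  have hlog : Real.log T = Real.log s₀ + (m s₀ - 1)⁻¹ := by
    rw [hT, Real.log_mul hs₀.ne' (Real.exp_pos _).ne', Real.log_exp]
  have hpos : 0 < (m T - 1)⁻¹ := inv_pos.2 (hu T hsT).2
  linarith
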